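/- Let s > 1 be an integer and let w be an integer with |w| ≤ 4 or |w| = 6. Then: (1) if w ≠ 0, the residue class w + sℤ is s-good with good representative w; and (2) for every integer t such that w + st ≠ 0 and −4 < s/(w + st) < 4, the number s/(w + st) is a relation number. -/

import Mathlib

/-- `a = [[1,0],[1,1]]` as an element of `SL(2, ℂ)`. -/
def matA : Matrix.SpecialLinearGroup (Fin 2) ℂ :=
  ⟨!![1, 0; 1, 1], by simp [Matrix.det_fin_two_of]⟩

/-- `b_q = [[1,q],[0,1]]` as an element of `SL(2, ℂ)`. -/
def matB (q : ℂ) : Matrix.SpecialLinearGroup (Fin 2) ℂ :=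
  ⟨!![1, q; 0, 1], by simp [Matrix.det_fin_two_of]⟩

/-- `q` is a relation number: the homomorphism `F₂ → SL(2,ℂ)`, `x ↦ a`, `y ↦ b_q`,
is not injective. -/
def IsRelationNumber (q : ℂ) : Prop :=
  ¬ Function.Injective
    (FreeGroup.lift (fun i : Bool => if i then matA else matB q) :
      FreeGroup Bool →* Matrix.SpecialLinearGroup (Fin 2) ℂ)

/-- `q` is an `ℓ`-step relation number: there are `k ≤ ℓ` and nonzero integers
`m_1, …, m_{2k+1}` with `b_q^{m_1} a^{m_2} ⋯ b_q^{m_{2k+1}}` lower triangular. -/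
def IsStepRelationNumber (ℓ : ℕ) (q : ℂ) : Prop :=
  ∃ k : ℕ, k ≤ ℓ ∧ ∃ m : Fin (2 * k + 1) → ℤ, (∀ i, m i ≠ 0) ∧
    ((List.ofFn (fun i : Fin (2 * k + 1) =>
      (if (i : ℕ) % 2 = 0 then matB q else matA) ^ (m i))).prod).val 0 1 = 0

/-- The residue class `w + smℤ` is `s`-good with good representative `w`. -/
def IsGoodRep (s w m : ℤ) : Prop :=
  ∃ y : ℤ, y * (Int.gcd w (s * m) : ℤ) ∣ m * (Int.gcd w s : ℤ) ∧
    (w ∣ s * m * y + (Int.gcd w (s * m) : ℤ) ∨ w ∣ s * m * y - (Int.gcd w (s * m) : ℤ))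

/-!
Both generators are unipotent, so `a` commutes with `g a g⁻¹` exactly when `g` is lower triangular.
Hence an alternating word `b^{m₁} a^{n₁} ⋯ b^{k}` with nonzero exponents that is lower triangular
at `q` yields a relation at `q`; the relation is nontrivial in the free group because, by ping-pong,
no such word is lower triangular at `q = 4`.

For `q = s / r` with `r = w + s t`, dividing by `gcd w s` makes `w` and `s` coprime. The moduli
`1, 2, 3, 4, 6` are those whose only units are `±1`, so `s ≡ ε = ±1` and `t r ≡ ε t²` modulo `w`.
Either `w ∣ t²`, or `t² ≡ g` for some `g` dividing `w` and `t`; explicit words with two and four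
powers of `b` respectively then work, unless some exponent in them vanishes. The degenerate cases
have `t = 0` or `t = -1` and lead to numbers near an integer, where the bound `|q| < 4` leaves ten
sporadic values.
-/

/-- The word `y ^ m₁ * x ^ n₁ * ⋯ * y ^ mⱼ * x ^ nⱼ * y ^ k` in the free group on `x = of true` and
`y = of false`, encoded by the list of the pairs `(mᵢ, nᵢ)` and the last exponent `k`. -/
def altWord (k : ℤ) : List (ℤ × ℤ) → FreeGroup Bool
  | [] => FreeGroup.of false ^ k
  | p :: l => FreeGroup.of false ^ p.1 * (FreeGroup.of true ^ p.2 * altWord k l)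

/-- The second column of the image of `altWord k l` in `SL(2, ℂ)`, with its upper entry divided by
`q`: in these coordinates `b_q ^ m` acts by `(x, y) ↦ (x + m y, y)` and `a ^ n` by
`(x, y) ↦ (x, y + n q x)`. -/
def altVec (q : ℂ) (k : ℤ) : List (ℤ × ℤ) → ℂ × ℂ
  | [] => (k, 1)
  | p :: l =>
      ((altVec q k l).1 + p.1 * ((altVec q k l).2 + p.2 * q * (altVec q k l).1),
        (altVec q k l).2 + p.2 * q * (altVec q k l).1)

/-- Some alternating word with nonzero exponents, starting and ending in a power of `b_q`, is lower
triangular. At `q = 0`, where every such word is, the normalisation in `altVec` makes the condition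
say instead that the exponents of `b_q` add up to zero. -/
def HasTriangularWord (q : ℂ) : Prop :=
  ∃ (k : ℤ) (l : List (ℤ × ℤ)), k ≠ 0 ∧ (∀ p ∈ l, p.1 ≠ 0 ∧ p.2 ≠ 0) ∧ (altVec q k l).1 = 0

/-- The homomorphism `F₂ → SL(2, ℂ)`, `x ↦ a`, `y ↦ b_q`. -/
def relationHom (q : ℂ) : FreeGroup Bool →* Matrix.SpecialLinearGroup (Fin 2) ℂ :=
  FreeGroup.lift (fun i : Bool => if i then matA else matB q)

/-- The moduli `w ≥ 1` for which every unit modulo `w` is `±1`. -/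
def plusMinusOneModuli : Finset ℤ := {1, 2, 3, 4, 6}

/-! ### Triangular words give relations -/

theorem coe_matA_zpow (n : ℤ) : (matA ^ n).val = !![1, 0; (n : ℂ), 1] := by
  induction n using Int.induction_on with
  | zero => simp [Matrix.one_fin_two]
  | succ n ih =>
    rw [zpow_add_one, Matrix.SpecialLinearGroup.coe_mul, ih]
    simp [matA]
  | pred n ih =>
    rw [zpow_sub_one, Matrix.SpecialLinearGroup.coe_mul, ih, Matrix.SpecialLinearGroup.coe_inv]
    simp [matA, Matrix.adjugate_fin_two_of, sub_eq_add_neg]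

theorem coe_matB_zpow (q : ℂ) (n : ℤ) : (matB q ^ n).val = !![1, n * q; 0, 1] := by
  induction n using Int.induction_on with
  | zero => simp [Matrix.one_fin_two]
  | succ n ih =>
    rw [zpow_add_one, Matrix.SpecialLinearGroup.coe_mul, ih]
    simp [matB, add_mul, add_comm]
  | pred n ih =>
    rw [zpow_sub_one, Matrix.SpecialLinearGroup.coe_mul, ih, Matrix.SpecialLinearGroup.coe_inv]
    simp [matB, Matrix.adjugate_fin_two_of, sub_mul]
    ring

theorem relationHom_altWord_apply (q : ℂ) (k : ℤ) (l : List (ℤ × ℤ)) :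
    (relationHom q (altWord k l)).val 0 1 = q * (altVec q k l).1 ∧
      (relationHom q (altWord k l)).val 1 1 = (altVec q k l).2 := by
  induction l with
  | nil => simp [altWord, altVec, relationHom, coe_matB_zpow, mul_comm]
  | cons p l ih =>
    obtain ⟨ih₀, ih₁⟩ := ih
    have hcons : (relationHom q (altWord k (p :: l))).val =
        !![1, p.1 * q; 0, 1] * (!![1, 0; (p.2 : ℂ), 1] * (relationHom q (altWord k l)).val) := by
      rw [← coe_matA_zpow, ← coe_matB_zpow]
      simp [altWord, relationHom]
    rw [hcons]
    simp only [Matrix.mul_apply, Fin.sum_univ_two, ih₀, ih₁, altVec, Matrix.of_apply,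
      Matrix.cons_val', Matrix.cons_val_zero, Matrix.cons_val_one, Matrix.cons_val_fin_one]
    constructor <;> ring

theorem coe_conj_matA (g : Matrix.SpecialLinearGroup (Fin 2) ℂ) :
    (g * matA * g⁻¹).val =
      !![1 + g.val 0 1 * g.val 1 1, -g.val 0 1 ^ 2; g.val 1 1 ^ 2, 1 - g.val 0 1 * g.val 1 1] := by
  have hdet := g.det_coe
  rw [Matrix.det_fin_two] at hdet
  rw [Matrix.SpecialLinearGroup.coe_mul, Matrix.SpecialLinearGroup.coe_mul,
    Matrix.SpecialLinearGroup.coe_inv, Matrix.adjugate_fin_two]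
  ext i j
  fin_cases i <;> fin_cases j <;> simp [matA, Matrix.mul_apply, Fin.sum_univ_two]
  · linear_combination hdet
  · ring
  · ring
  · linear_combination hdet

theorem commute_matA_conj_iff (g : Matrix.SpecialLinearGroup (Fin 2) ℂ) :
    Commute matA (g * matA * g⁻¹) ↔ g.val 0 1 = 0 := by
  have hcoe : Commute matA (g * matA * g⁻¹) ↔ Commute matA.val (g * matA * g⁻¹).val := by
    simp only [commute_iff_eq, ← Matrix.SpecialLinearGroup.coe_mul]
    exact Subtype.ext_iff
  rw [hcoe, coe_conj_matA, commute_iff_eq]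
  constructor
  · intro h
    simpa [matA, Matrix.mul_apply, Fin.sum_univ_two] using congrFun (congrFun h 0) 0
  · intro h
    simp [matA, h, add_comm]

theorem norm_sub_norm_le_norm_add_intCast_mul {n : ℤ} (hn : n ≠ 0) (x y : ℂ) :
    ‖x‖ - ‖y‖ ≤ ‖y + n * x‖ := by
  have hx : ‖x‖ ≤ ‖n * x‖ := by
    rw [norm_mul, Complex.norm_intCast]
    exact le_mul_of_one_le_left (norm_nonneg x) (mod_cast Int.one_le_abs hn)
  have htri := norm_sub_norm_le (n * x) (-y)
  rw [norm_neg, sub_neg_eq_add, add_comm] at htri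
  linarith

theorem norm_altVec_snd_lt_two_mul_norm_fst {q : ℂ} (hq : 4 ≤ ‖q‖) {k : ℤ} (hk : k ≠ 0)
    {l : List (ℤ × ℤ)} (hl : ∀ p ∈ l, p.1 ≠ 0 ∧ p.2 ≠ 0) :
    ‖(altVec q k l).2‖ < 2 * ‖(altVec q k l).1‖ := by
  induction l with
  | nil =>
    have : (1 : ℝ) ≤ |(k : ℝ)| := mod_cast Int.one_le_abs hk
    simp only [altVec, norm_one, Complex.norm_intCast]
    linarith
  | cons p l ih =>
    obtain ⟨hp, hl⟩ := List.forall_mem_cons.mp hl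
    specialize ih hl
    have ha := norm_sub_norm_le_norm_add_intCast_mul hp.2 (q * (altVec q k l).1) (altVec q k l).2
    rw [norm_mul, ← mul_assoc] at ha
    have hb := norm_sub_norm_le_norm_add_intCast_mul hp.1
      ((altVec q k l).2 + p.2 * q * (altVec q k l).1) (altVec q k l).1
    have hq' := mul_le_mul_of_nonneg_right hq (norm_nonneg (altVec q k l).1)
    simp only [altVec]
    linarith

theorem HasTriangularWord.isRelationNumber {q : ℂ} (h : HasTriangularWord q) :
    IsRelationNumber q := by
  obtain ⟨k, l, hk, hl, hzero⟩ := h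
  intro hinj
  change Function.Injective (relationHom q) at hinj
  set x : FreeGroup Bool := FreeGroup.of true
  set g := altWord k l
  have hcomm_iff (q' : ℂ) :
      Commute (relationHom q' x) (relationHom q' (g * x * g⁻¹)) ↔ q' * (altVec q' k l).1 = 0 := by
    have hx : relationHom q' x = matA := by simp [relationHom, x]
    rw [map_mul, map_mul, map_inv, hx, commute_matA_conj_iff, (relationHom_altWord_apply q' k l).1]
  have hcomm : Commute x (g * x * g⁻¹) :=
    ((hcomm_iff q).mpr (by rw [hzero, mul_zero])).of_map hinj
  have hzero_at_four : (altVec 4 k l).1 = 0 := by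
    simpa using (hcomm_iff 4).mp (hcomm.map (relationHom 4))
  have hpos := norm_altVec_snd_lt_two_mul_norm_fst (q := 4) (by norm_num) hk hl
  rw [hzero_at_four, norm_zero, mul_zero] at hpos
  exact hpos.not_ge (norm_nonneg _)

/-! ### Families of triangular words -/

theorem altVec_map_mul_snd (q : ℂ) (n k : ℤ) (l : List (ℤ × ℤ)) :
    altVec q k (l.map fun p => (p.1, n * p.2)) = altVec (n * q) k l := by
  induction l with
  | nil => rfl
  | cons p l ih =>
    have hassoc : ((n * p.2 : ℤ) : ℂ) * q = p.2 * (n * q) := by push_cast; ring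
    simp only [List.map_cons, altVec, ih, hassoc]

theorem HasTriangularWord.of_intCast_mul {q : ℂ} {n : ℤ} (hn : n ≠ 0)
    (h : HasTriangularWord (n * q)) : HasTriangularWord q := by
  obtain ⟨k, l, hk, hl, hzero⟩ := h
  refine ⟨k, l.map fun p => (p.1, n * p.2), hk, ?_, by rwa [altVec_map_mul_snd]⟩
  simpa only [List.forall_mem_map, mul_ne_zero_iff, hn, ne_eq, not_false_eq_true, true_and] using hl

theorem HasTriangularWord.of_neg {q : ℂ} (h : HasTriangularWord (-q)) : HasTriangularWord q :=
  .of_intCast_mul (n := -1) (by norm_num) (by simpa using h)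

theorem hasTriangularWord_of_dvd_mul {s w t r : ℤ} (hr : r = w + s * t) (hr0 : r ≠ 0) (ht : t ≠ 0)
    (hd : w ∣ t * r) : HasTriangularWord (s / r) := by
  obtain ⟨k, hk⟩ := hd
  have hk0 : k ≠ 0 := by
    rintro rfl
    simp [ht, hr0] at hk
  have hrc : (r : ℂ) ≠ 0 := mod_cast hr0
  have hkc : (t : ℂ) * r = w * k := mod_cast hk
  have hrsum : (r : ℂ) = w + s * t := mod_cast hr
  refine ⟨t, [(-k, -1)], ht, by simp [hk0], ?_⟩
  simp only [altVec]
  push_cast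
  field_simp
  linear_combination hkc - k * hrsum

theorem hasTriangularWord_of_mul_eq_add {s w t r m e : ℤ} (hr : r = w + s * t) (hr0 : r ≠ 0)
    (ht : t ≠ 0) (hm : t * r = m * w + e) (hm0 : m ≠ 0) (hmt : m + t ≠ 0) (he : e ∣ r) :
    HasTriangularWord (s / r) := by
  obtain ⟨c, hc⟩ := he
  have hc0 : c ≠ 0 := by
    rintro rfl
    exact hr0 (by simpa using hc)
  have hrc : (r : ℂ) ≠ 0 := mod_cast hr0
  have hrsum : (r : ℂ) = w + s * t := mod_cast hr
  have hmc : (t : ℂ) * r = m * w + e := mod_cast hm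
  have hec : (r : ℂ) = e * c := mod_cast hc
  refine ⟨-m, [(-t, 1), (m, -(c * (m + t))), (t, -1)], neg_ne_zero.mpr hm0,
    by simp [ht, hm0, hmt, hc0], ?_⟩
  have hvec₁ : altVec (s / r) (-m) [(t, -1)] =
      ((e / r : ℂ), (1 + m * s / r : ℂ)) := by
    simp only [altVec, Prod.mk.injEq]
    push_cast
    constructor <;> field_simp
    linear_combination hmc - m * hrsum
  have hvec₂ : altVec (s / r) (-m) [(m, -(c * (m + t))), (t, -1)] =
      ((t : ℂ), (w / r : ℂ)) := by
    have hw : 1 + (m : ℂ) * s / r + -(c * (m + t)) * (s / r) * (e / r) = w / r := by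
      field_simp
      linear_combination r * hrsum + s * (m + t) * hec
    rw [altVec, hvec₁]
    push_cast
    rw [hw, Prod.mk.injEq]
    refine ⟨?_, rfl⟩
    field_simp
    linear_combination -hmc
  rw [altVec, hvec₂]
  push_cast
  field_simp
  linear_combination t * hrsum

theorem hasTriangularWord_two_mul_add_div {r e : ℤ} (hr0 : r ≠ 0) (he : e = 1 ∨ e = -1) :
    HasTriangularWord ((2 * r + e : ℤ) / r) := by
  have hrc : (r : ℂ) ≠ 0 := mod_cast hr0
  rcases he with rfl | rfl
  · refine ⟨-r, [(-r, 1), (-1, 1)], neg_ne_zero.mpr hr0, by simp [hr0], ?_⟩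
    simp only [altVec]
    push_cast
    field_simp
    ring
  · refine ⟨-r, [(-r, -1), (1, -1)], neg_ne_zero.mpr hr0, by simp [hr0], ?_⟩
    simp only [altVec]
    push_cast
    field_simp
    ring

theorem hasTriangularWord_add_div {r e : ℤ} (hr0 : r ≠ 0) (he : e = 1 ∨ e = -1) :
    HasTriangularWord ((r + e : ℤ) / r) :=
  hasTriangularWord_of_dvd_mul (w := -e) (t := 1) (by ring) hr0 one_ne_zero
    (by rcases he with rfl | rfl <;> simp)

theorem hasTriangularWord_intCast_of_lt_four {s : ℤ} (hs : 0 < s) (hs4 : s < 4) :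
    HasTriangularWord s := by
  obtain rfl | rfl | rfl : s = 2 * 1 + -1 ∨ s = 1 + 1 ∨ s = 2 * 1 + 1 := by omega
  · simpa using hasTriangularWord_two_mul_add_div (r := 1) one_ne_zero (.inr rfl)
  · simpa using hasTriangularWord_add_div (r := 1) one_ne_zero (.inl rfl)
  · simpa using hasTriangularWord_two_mul_add_div (r := 1) one_ne_zero (.inl rfl)

theorem hasTriangularWord_one_div {r : ℤ} (hr0 : r ≠ 0) : HasTriangularWord (1 / r) := by
  have hrc : (r : ℂ) ≠ 0 := mod_cast hr0
  refine .of_intCast_mul hr0 ?_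
  rw [mul_one_div_cancel hrc]
  simpa using hasTriangularWord_intCast_of_lt_four one_pos (by norm_num)

theorem hasTriangularWord_sporadic {s r : ℤ}
    (h : (s, r) ∈ ({(7, 2), (8, 3), (10, 3), (11, 3), (11, 4), (13, 4), (15, 4), (17, 6), (19, 6),
      (23, 6)} : Finset (ℤ × ℤ))) : HasTriangularWord (s / r) := by
  have of_word (k : ℤ) (l : List (ℤ × ℤ)) (hk : k ≠ 0) (hl : ∀ p ∈ l, p.1 ≠ 0 ∧ p.2 ≠ 0)
      (hzero : (altVec (s / r) k l).1 = 0) : HasTriangularWord (s / r) := ⟨k, l, hk, hl, hzero⟩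
  simp only [Finset.mem_insert, Finset.mem_singleton, Prod.mk.injEq] at h
  rcases h with h | h | h | h | h | h | h | h | h | h <;> obtain ⟨rfl, rfl⟩ := h
  · apply of_word (-2) [(-2, 1), (-1, 1), (-1, 1), (-1, 1)] <;> norm_num [altVec]
  · apply of_word (-6) [(-1, 1), (-1, 1)] <;> norm_num [altVec]
  · apply of_word (-3) [(-3, 1), (-1, 1), (-1, 1), (-1, 3), (-1, 1)] <;> norm_num [altVec]
  · apply of_word (-3) [(-3, 2), (-1, 1), (-1, 1), (-1, 1), (-1, 1), (-1, 2)] <;> norm_num [altVec]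
  · apply of_word (-1) [(4, -1), (-2, 1), (-1, 1)] <;> norm_num [altVec]
  · apply of_word (-1) [(-36, 1), (-1, 1), (-1, 1)] <;> norm_num [altVec]
  · apply of_word (-2) [(-2, 2), (-3, 1), (-1, 1), (-1, 1), (-1, 1), (-1, 1), (-1, 1), (-3, 2)] <;>
      norm_num [altVec]
  · apply of_word (-3) [(2, -1), (1, -1), (1, -4), (-1, 1)] <;> norm_num [altVec]
  · apply of_word (-6) [(-6, 1), (-1, 1), (-1, 1), (-3, 1), (-1, 1), (-1, 1)] <;> norm_num [altVec]
  · apply of_word (-2) [(2, 27), (1, -1), (1, -1), (1, -2), (3, -2), (1, -9), (-1, 1), (-1, 1),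
      (-1, 1), (-1, 1), (-1, 1), (-1, 1), (-1, 1)] <;> norm_num [altVec]

/-! ### Arithmetic of the moduli -/

theorem pos_of_mem_plusMinusOneModuli {w : ℤ} (hw : w ∈ plusMinusOneModuli) : 0 < w := by
  revert w
  decide

theorem mem_plusMinusOneModuli_of_dvd {v w : ℤ} (hw : w ∈ plusMinusOneModuli) (hv : 0 < v)
    (hvw : v ∣ w) : v ∈ plusMinusOneModuli := by
  have key : ∀ w ∈ plusMinusOneModuli, ∀ v ∈ Finset.Ioc 0 w, v ∣ w → v ∈ plusMinusOneModuli := by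
    decide
  have hle := Int.le_of_dvd (pos_of_mem_plusMinusOneModuli hw) hvw
  exact key w hw v (Finset.mem_Ioc.mpr ⟨hv, hle⟩) hvw

theorem emod_mem_Ico {w : ℤ} (hw : 0 < w) (n : ℤ) : n % w ∈ Finset.Ico 0 w :=
  Finset.mem_Ico.mpr ⟨Int.emod_nonneg n hw.ne', Int.emod_lt_of_pos n hw⟩

theorem exists_sign_dvd_sub_of_gcd_eq_one {s w : ℤ} (hw : w ∈ plusMinusOneModuli)
    (hsw : Int.gcd w s = 1) : ∃ ε : ℤ, (ε = 1 ∨ ε = -1) ∧ w ∣ s - ε := by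
  have key : ∀ w ∈ plusMinusOneModuli, ∀ j ∈ Finset.Ico 0 w, Int.gcd w j = 1 →
      w ∣ j - 1 ∨ w ∣ j - -1 := by decide
  have hmod : w ∣ s - s % w := Int.dvd_self_sub_emod
  have hlift {ε : ℤ} (h : w ∣ s % w - ε) : w ∣ s - ε := by simpa using dvd_add hmod h
  have hgcd : Int.gcd w (s % w) = 1 := by rwa [Int.gcd_comm, Int.gcd_emod, Int.gcd_comm]
  rcases key w hw _ (emod_mem_Ico (pos_of_mem_plusMinusOneModuli hw) s) hgcd with h | h
  · exact ⟨1, .inl rfl, hlift h⟩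
  · exact ⟨-1, .inr rfl, hlift h⟩

theorem dvd_sq_or_exists_dvd_sq_sub {w : ℤ} (hw : w ∈ plusMinusOneModuli) (t : ℤ) :
    w ∣ t ^ 2 ∨ ∃ g, g ∣ w ∧ g ∣ t ∧ w ∣ t ^ 2 - g := by
  have key : ∀ w ∈ plusMinusOneModuli, ∀ j ∈ Finset.Ico 0 w,
      w ∣ j ^ 2 ∨ ∃ g ∈ Finset.Icc (-2 : ℤ) 3, g ∣ w ∧ g ∣ j ∧ w ∣ j ^ 2 - g := by decide
  have hmod : w ∣ t - t % w := Int.dvd_self_sub_emod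
  have hsq : w ∣ t ^ 2 - (t % w) ^ 2 := hmod.trans (sub_dvd_pow_sub_pow _ _ 2)
  rcases key w hw _ (emod_mem_Ico (pos_of_mem_plusMinusOneModuli hw) t) with h | ⟨g, -, hgw, hgt, h⟩
  · exact .inl (by simpa using dvd_add hsq h)
  · exact .inr ⟨g, hgw, by simpa using dvd_add (hgw.trans hmod) hgt, by simpa using dvd_add hsq h⟩

/-! ### Triangular words for `s / (w + s t)` -/

theorem hasTriangularWord_div_self {s w ε : ℤ} (hs : 0 < s) (hw : w ∈ plusMinusOneModuli)
    (hε : ε = 1 ∨ ε = -1) (hd : w ∣ s - ε) (hb : s < 4 * w) : HasTriangularWord (s / w) := by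
  have hw_pos := pos_of_mem_plusMinusOneModuli hw
  -- For `w ≤ 2` both signs are available, and `ε = 1` keeps the list of sporadic values short.
  wlog hε' : ε = 1 ∨ 2 < w generalizing ε
  · have hε_neg : ε = -1 := by omega
    obtain rfl | rfl : w = 1 ∨ w = 2 := by omega
    all_goals exact this (ε := 1) (.inl rfl) (by omega) (.inl rfl)
  obtain ⟨k, hk⟩ := hd
  obtain rfl : s = w * k + ε := by linarith
  have hε_le : -1 ≤ ε ∧ ε ≤ 1 := by omega
  have hk_nonneg : 0 ≤ k := by by_contra!; nlinarith
  have hk_le : k ≤ 4 := by by_contra!; nlinarith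
  interval_cases k
  · obtain rfl : ε = 1 := by omega
    simpa using hasTriangularWord_one_div hw_pos.ne'
  · simpa using hasTriangularWord_add_div hw_pos.ne' hε
  · simpa [mul_comm] using hasTriangularWord_two_mul_add_div hw_pos.ne' hε
  all_goals
    apply hasTriangularWord_sporadic
    rcases hε with rfl | rfl <;> fin_cases hw <;> first | omega | decide

theorem hasTriangularWord_div_sub {s w ε : ℤ} (hs : 0 < s) (hw : 0 < w) (hε : ε = 1 ∨ ε = -1)
    (hd : w ∣ s - ε) (hr0 : s - w ≠ 0) (hb : s < 4 * |s - w|) :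
    HasTriangularWord (s / (s - w : ℤ)) := by
  obtain ⟨k, hk⟩ := hd
  obtain rfl | hk1 := eq_or_ne k 1
  · have hr : s - w = ε := by linarith
    rw [hr] at hb ⊢
    rcases hε with rfl | rfl
    · simpa using hasTriangularWord_intCast_of_lt_four hs (by simpa using hb)
    · refine .of_neg ?_
      simpa [div_neg] using hasTriangularWord_intCast_of_lt_four hs (by simpa using hb)
  obtain rfl | hk2 := eq_or_ne k 2
  · have hsum : s = 2 * (s - w) + -ε := by linarith
    nth_rewrite 1 [hsum]
    exact hasTriangularWord_two_mul_add_div hr0 (by omega)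
  · exact hasTriangularWord_of_mul_eq_add (w := -w) (t := 1) (m := 1 - k) (e := ε) (by ring) hr0
      one_ne_zero (by linear_combination hk) (by omega) (by omega)
      (by rcases hε with rfl | rfl <;> simp)

theorem eq_one_of_mul_eq_of_dvd {t x e : ℤ} (he0 : e ≠ 0) (he : e ∣ x) (h : t * x = e)
    (ht : t ≠ -1) : t = 1 := by
  obtain ⟨c, rfl⟩ := he
  have hunit : t * c = 1 := mul_left_cancel₀ he0 (by linear_combination h)
  exact (Int.isUnit_iff.mp (.of_mul_eq_one c hunit)).resolve_right ht

theorem hasTriangularWord_of_ne_neg_one {s w t r ε : ℤ} (hs : 0 < s) (hw : w ∈ plusMinusOneModuli)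
    (hε : ε = 1 ∨ ε = -1) (hd : w ∣ s - ε) (ht0 : t ≠ 0) (ht : t ≠ -1) (hr : r = w + s * t)
    (hr0 : r ≠ 0) : HasTriangularWord (s / r) := by
  have hw_pos := pos_of_mem_plusMinusOneModuli hw
  have hmod : w ∣ t * r - ε * t ^ 2 := by
    rw [show t * r - ε * t ^ 2 = w * t + (s - ε) * t ^ 2 by rw [hr]; ring]
    exact dvd_add (dvd_mul_right w t) (hd.mul_right _)
  rcases dvd_sq_or_exists_dvd_sq_sub hw t with hsq | ⟨g, hgw, hgt, hg⟩
  · exact hasTriangularWord_of_dvd_mul hr hr0 ht0 (by simpa using dvd_add hmod (hsq.mul_left ε))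
  obtain ⟨m, hm⟩ : w ∣ t * r - ε * g := by
    simpa [mul_sub] using dvd_add hmod (hg.mul_left ε)
  have hunit : IsUnit ε := Int.isUnit_iff.mpr hε
  obtain ⟨hew, het⟩ : ε * g ∣ w ∧ ε * g ∣ t := by
    simpa only [hunit.mul_left_dvd] using And.intro hgw hgt
  have her : ε * g ∣ r := hr ▸ dvd_add hew (het.mul_left s)
  have he0 : ε * g ≠ 0 := ne_zero_of_dvd_ne_zero hw_pos.ne' hew
  have he_le : ε * g ≤ w := Int.le_of_dvd hw_pos hew
  refine hasTriangularWord_of_mul_eq_add (m := m) hr hr0 ht0 (by linear_combination hm) ?_ ?_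
    her
  · rintro rfl
    obtain rfl := eq_one_of_mul_eq_of_dvd he0 her (by linear_combination hm) ht
    linarith
  · intro hmt
    obtain rfl := eq_one_of_mul_eq_of_dvd he0 (dvd_add her hew)
      (by linear_combination hm + w * hmt) ht
    obtain rfl : m = -1 := by omega
    linarith

theorem hasTriangularWord_of_dvd_sub {s w t r ε : ℤ} (hs : 0 < s) (hw : w ∈ plusMinusOneModuli)
    (hε : ε = 1 ∨ ε = -1) (hd : w ∣ s - ε) (hr : r = w + s * t) (hr0 : r ≠ 0)
    (hb : s < 4 * |r|) : HasTriangularWord (s / r) := by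
  have hw_pos := pos_of_mem_plusMinusOneModuli hw
  obtain rfl | ht0 := eq_or_ne t 0
  · obtain rfl : r = w := by simpa using hr
    exact hasTriangularWord_div_self hs hw hε hd (by rwa [abs_of_pos hw_pos] at hb)
  obtain rfl | ht := eq_or_ne t (-1)
  · obtain rfl : r = -(s - w) := by linarith
    rw [abs_neg] at hb
    have := hasTriangularWord_div_sub hs hw_pos hε hd (neg_ne_zero.mp hr0) hb
    exact .of_neg (by rwa [Int.cast_neg, div_neg, neg_neg])
  · exact hasTriangularWord_of_ne_neg_one hs hw hε hd ht0 ht hr hr0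

theorem exists_eq_gcd_mul_and_dvd_sub {s w : ℤ} (hw : w ∈ plusMinusOneModuli) :
    ∃ s' w' ε : ℤ, s = Int.gcd w s * s' ∧ w = Int.gcd w s * w' ∧ w' ∈ plusMinusOneModuli ∧
      (ε = 1 ∨ ε = -1) ∧ w' ∣ s' - ε := by
  have hw_pos := pos_of_mem_plusMinusOneModuli hw
  have hgcd_pos : 0 < Int.gcd w s := Int.gcd_pos_of_ne_zero_left s hw_pos.ne'
  obtain ⟨w', s', hcoprime, hw', hs'⟩ := Int.exists_gcd_one hgcd_pos
  have hw'_pos : 0 < w' := pos_of_mul_pos_left (hw' ▸ hw_pos) (Int.natCast_nonneg _)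
  have hw'_mem := mem_plusMinusOneModuli_of_dvd hw hw'_pos ⟨_, hw'⟩
  obtain ⟨ε, hε, hd⟩ := exists_sign_dvd_sub_of_gcd_eq_one hw'_mem hcoprime
  exact ⟨s', w', ε, by rw [mul_comm, ← hs'], by rw [mul_comm, ← hw'], hw'_mem, hε, hd⟩

theorem hasTriangularWord_of_mem_plusMinusOneModuli {s w t r : ℤ} (hs : 0 < s)
    (hw : w ∈ plusMinusOneModuli) (hr : r = w + s * t) (hr0 : r ≠ 0) (hb : s < 4 * |r|) :
    HasTriangularWord (s / r) := by
  obtain ⟨s', w', ε, hs', hw', hw'_mem, hε, hd⟩ := exists_eq_gcd_mul_and_dvd_sub (s := s) hw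
  set d := (Int.gcd w s : ℤ)
  have hr' : r = d * (w' + s' * t) := by linear_combination hr + hw' + t * hs'
  have hd_pos : 0 < d :=
    (Int.natCast_nonneg _).lt_of_ne' (left_ne_zero_of_mul (hs' ▸ hs.ne'))
  have hs'_pos : 0 < s' := pos_of_mul_pos_right (hs' ▸ hs) hd_pos.le
  have hb' : s' < 4 * |w' + s' * t| := by
    rw [hr', hs', abs_mul, abs_of_pos hd_pos, mul_left_comm] at hb
    exact lt_of_mul_lt_mul_left hb hd_pos.le
  have hdc : (d : ℂ) ≠ 0 := mod_cast hd_pos.ne'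
  rw [hr', hs', Int.cast_mul, Int.cast_mul, mul_div_mul_left _ _ hdc]
  exact hasTriangularWord_of_dvd_sub hs'_pos hw'_mem hε hd rfl
    (right_ne_zero_of_mul (hr' ▸ hr0)) hb'

/-! ### Good representatives -/

theorem isGoodRep_one_of_mem_plusMinusOneModuli {s w : ℤ} (hw : w ∈ plusMinusOneModuli) :
    IsGoodRep s w 1 := by
  obtain ⟨s', w', ε, hs', hw', -, hε, hd⟩ := exists_eq_gcd_mul_and_dvd_sub (s := s) hw
  have hdvd : w ∣ s - Int.gcd w s * ε := by
    have := mul_dvd_mul_left (Int.gcd w s : ℤ) hd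
    rwa [mul_sub, ← hs', ← hw'] at this
  refine ⟨1, by simp, ?_⟩
  rcases hε with rfl | rfl
  · exact .inr (by simpa using hdvd)
  · exact .inl (by simpa using hdvd)

theorem IsGoodRep.of_neg {s w m : ℤ} (h : IsGoodRep s (-w) m) : IsGoodRep s w m := by
  simpa only [IsGoodRep, Int.neg_gcd, neg_dvd] using h

theorem hasTriangularWord_div_mul {s t : ℤ} (hs : s ≠ 0) (ht : t ≠ 0) :
    HasTriangularWord (s / (s * t : ℤ)) := by
  have hsc : (s : ℂ) ≠ 0 := mod_cast hs
  rw [Int.cast_mul, div_mul_cancel_left₀ hsc, ← one_div]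
  exact hasTriangularWord_one_div ht

theorem eq_zero_or_mem_plusMinusOneModuli {w : ℤ} (hw : |w| ≤ 4 ∨ |w| = 6) :
    w = 0 ∨ w ∈ plusMinusOneModuli ∨ -w ∈ plusMinusOneModuli := by
  simp only [plusMinusOneModuli, Finset.mem_insert, Finset.mem_singleton]
  rcases abs_cases w with h | h <;> omega

theorem abs_lt_four_mul_abs_of_div_mem_Ioo {s r : ℤ} (hr0 : r ≠ 0) (hlb : -4 < (s : ℚ) / (r : ℚ))
    (hub : (s : ℚ) / (r : ℚ) < 4) : |s| < 4 * |r| := by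
  have hr_pos : (0 : ℚ) < |(r : ℚ)| := abs_pos.mpr (mod_cast hr0)
  have habs : |(s : ℚ) / (r : ℚ)| < 4 := abs_lt.mpr ⟨hlb, hub⟩
  rw [abs_div, div_lt_iff₀ hr_pos] at habs
  exact_mod_cast habs

theorem stmt15 (s : ℤ) (hs : 1 < s) (w : ℤ) (hw : |w| ≤ 4 ∨ |w| = 6) :
    (w ≠ 0 → IsGoodRep s w 1) ∧
      ∀ t : ℤ, w + s * t ≠ 0 →
        -4 < (s : ℚ) / ((w + s * t : ℤ) : ℚ) → (s : ℚ) / ((w + s * t : ℤ) : ℚ) < 4 →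
          IsRelationNumber ((s : ℂ) / (((w + s * t : ℤ)) : ℂ)) := by
  have hs_pos : 0 < s := by omega
  have hcases := eq_zero_or_mem_plusMinusOneModuli hw
  refine ⟨fun hw0 => ?_, fun t hr0 hlb hub => HasTriangularWord.isRelationNumber ?_⟩
  · rcases hcases.resolve_left hw0 with hw | hw
    · exact isGoodRep_one_of_mem_plusMinusOneModuli hw
    · exact (isGoodRep_one_of_mem_plusMinusOneModuli hw).of_neg
  · have hb : s < 4 * |w + s * t| :=
      (le_abs_self s).trans_lt (abs_lt_four_mul_abs_of_div_mem_Ioo hr0 hlb hub)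
    rcases hcases with rfl | hw | hw
    · rw [zero_add] at hr0 ⊢
      exact hasTriangularWord_div_mul hs_pos.ne' (right_ne_zero_of_mul hr0)
    · exact hasTriangularWord_of_mem_plusMinusOneModuli hs_pos hw rfl hr0 hb
    · have hneg := hasTriangularWord_of_mem_plusMinusOneModuli (t := -t) (r := -(w + s * t)) hs_pos
        hw (by ring) (neg_ne_zero.mpr hr0) (by rwa [abs_neg])
      exact .of_neg (by rwa [Int.cast_neg, div_neg] at hneg)
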